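/- arXiv:1905.07145 — 2 statements merged into one kernel-verified Lean document; each statement's English description precedes it below -/
import Mathlib

section
/- Let $T\in\mathbb{N}$, let $\beta>0$ be a real switching cost, and let $g_t:\{0,1\}\to[0,\infty)$ for $t=1,\dots,T$. For a schedule $s=(s_1,\dots,s_T)\in\{0,1\}^T$, with $s_0:=0$, put $\mathrm{Cost}(s):=\sum_{t=1}^T\big(g_t(s_t)+\beta\,(s_t-s_{t-1})^+\big)$, where $(x)^+:=\max\{x,0\}$, and let $\mathrm{Opt}:=\min_{s\in\{0,1\}^T}\mathrm{Cost}(s)$ (problem SP). Let $\Delta(0):=-\beta$ and $\Delta(t):=\min\{0,\max\{-\beta,\ \Delta(t-1)+g_t(0)-g_t(1)\}\}$ for $t=1,\dots,T$. The offline algorithm $\mathrm{OFA}_s$ outputs the schedule $z=(z_1,\dots,z_T)$ defined backwards by $z_{T+1}:=0$ and, for $t=T,T-1,\dots,1$: $z_t:=0$ if $\Delta(t)=-\beta$; $z_t:=1$ if $\Delta(t)=0$; and $z_t:=z_{t+1}$ otherwise. Then $z$ is optimal for SP: $\mathrm{Cost}(z)\le\mathrm{Cost}(s)$ for every schedule $s\in\{0,1\}^T$;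 that is, $\mathrm{Cost}(z)=\mathrm{Opt}$. -/
/-- A schedule `(s_1, …, s_T) ∈ {0,1}^T`; the entry with index `i : Fin T` is the state in time
slot `i + 1`. -/
abbrev Schedule (T : ℕ) : Type := Fin T → Fin 2

/-- The state `s_t` of a schedule at time `t`: the given entry for `1 ≤ t ≤ T`, and the boundary
value `0` at all other times (in particular `s_0 = 0`). -/
def Schedule.state {T : ℕ} (s : Schedule T) (t : ℕ) : Fin 2 :=
  if h : 1 ≤ t ∧ t ≤ T then s ⟨t - 1, by omega⟩ else 0

/-- `Cost(s) = ∑_{t=1}^T (g_t(s_t) + β (s_t - s_{t-1})^+)`. -/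
noncomputable def scheduleCost (T : ℕ) (β : ℝ) (g : ℕ → Fin 2 → ℝ) (s : Schedule T) : ℝ :=
  ∑ t ∈ Finset.Icc 1 T,
    (g t (s.state t) + β * max (((s.state t).val : ℝ) - ((s.state (t - 1)).val : ℝ)) 0)

/-- The minimum of the cost over the finite nonempty set of all schedules. -/
noncomputable def optCost (T : ℕ) (β : ℝ) (g : ℕ → Fin 2 → ℝ) : ℝ :=
  Finset.univ.inf' Finset.univ_nonempty (scheduleCost T β g)

/-- The one-slot cost difference `δ(t) = g_t(0) - g_t(1)`. -/
def costDiff (g : ℕ → Fin 2 → ℝ) (t : ℕ) : ℝ := g t 0 - g t 1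

/-- The cumulative cost difference: `Δ(0) = -β` and
`Δ(t) = min {0, max {-β, Δ(t-1) + δ(t)}}` for `t ≥ 1`. -/
noncomputable def cumDiff (β : ℝ) (g : ℕ → Fin 2 → ℝ) : ℕ → ℝ
  | 0 => -β
  | t + 1 => min 0 (max (-β) (cumDiff β g t + costDiff g (t + 1)))

/-- The backward recursion of the offline algorithm: the value is `0` after time `T`; at a time
`t ≤ T` it is `0` if `Δ(t) = -β`, otherwise `1` if `Δ(t) = 0`, and otherwise the value at
time `t + 1`. -/
noncomputable def ofaState (T : ℕ) (β : ℝ) (g : ℕ → Fin 2 → ℝ) (t : ℕ) : Fin 2 :=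
  if T < t then 0
  else if cumDiff β g t = -β then 0
  else if cumDiff β g t = 0 then 1
  else ofaState T β g (t + 1)
termination_by T + 1 - t

/-- The schedule `z = (z_1, …, z_T)` output by the offline algorithm. -/
noncomputable def ofaSchedule (T : ℕ) (β : ℝ) (g : ℕ → Fin 2 → ℝ) : Schedule T :=
  fun i => ofaState T β g (i.val + 1)

/-
Let `W_t(x)` be the least cost of slots `1, …, t` together with the switch into state `x`
afterwards. By Bellman's recursion and induction on `t`, `W_t(0) - W_t(1) = Δ(t)`: the clipping to
`[-β, 0]` records that switching up costs `β` and switching down is free. Hence `Δ(t)` decides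
which state in slot `t` is the best predecessor of a given next state: state `0` if `Δ(t) = -β`,
state `1` if `Δ(t) = 0`, and the next state itself otherwise. These are the choices of the backward
recursion, so its schedule attains the Bellman minimum in every slot.
-/

section Clip

variable {α : Type*} [AddCommGroup α] [LinearOrder α] [IsOrderedAddMonoid α] {c : α}

theorem min_sub_min_add_eq_min_zero_max_neg (hc : 0 ≤ c) (a b : α) :
    min a b - min (a + c) b = min 0 (max (-c) (a - b)) := by
  grind

theorem min_zero_max_neg_eq_neg_iff {a : α} (hc : 0 < c) : min 0 (max (-c) a) = -c ↔ a ≤ -c := by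
  grind

theorem min_zero_max_neg_eq_zero_iff {a : α} (hc : 0 < c) : min 0 (max (-c) a) = 0 ↔ 0 ≤ a := by
  rw [min_eq_left_iff, le_max_iff, or_iff_right (neg_neg_of_pos hc).not_ge]

end Clip

section DynamicProgramming

variable {σ M : Type*} [AddCommMonoid M]

/-- The cost of the state path `u` over the slots `1, …, t`, where `f k x` is the cost of being in
state `x` in slot `k` and `d x y` that of moving from `x` to `y`; `u 0` is the initial state. -/
def pathCost (f : ℕ → σ → M) (d : σ → σ → M) (u : ℕ → σ) (t : ℕ) : M :=
  ∑ k ∈ Finset.Icc 1 t, (f k (u k) + d (u (k - 1)) (u k))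

theorem pathCost_zero (f : ℕ → σ → M) (d : σ → σ → M) (u : ℕ → σ) : pathCost f d u 0 = 0 := by
  simp [pathCost]

theorem pathCost_succ (f : ℕ → σ → M) (d : σ → σ → M) (u : ℕ → σ) (t : ℕ) :
    pathCost f d u (t + 1) =
      pathCost f d u t + d (u t) (u (t + 1)) + f (t + 1) (u (t + 1)) := by
  rw [pathCost, Finset.sum_Icc_succ_top (Nat.le_add_left 1 t), Nat.add_sub_cancel,
    add_comm (f _ _), ← add_assoc, pathCost]

variable [SemilatticeInf M] [Fintype σ] [Nonempty σ]

/-- Bellman's value function: the least cost of the slots `1, …, t` from the initial state `x₀`,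
including the move into state `x` after slot `t`. Charging that move in advance makes the initial
value finite for every `x`. -/
def arrivalCost (f : ℕ → σ → M) (d : σ → σ → M) (x₀ : σ) : ℕ → σ → M
  | 0, x => d x₀ x
  | t + 1, x => Finset.univ.inf' Finset.univ_nonempty fun y =>
      arrivalCost f d x₀ t y + f (t + 1) y + d y x

theorem arrivalCost_eq_pathCost_add {f : ℕ → σ → M} {d : σ → σ → M} {u : ℕ → σ} {t : ℕ}
    (hu : ∀ k < t, arrivalCost f d (u 0) (k + 1) (u (k + 2)) =
      arrivalCost f d (u 0) k (u (k + 1)) + f (k + 1) (u (k + 1)) + d (u (k + 1)) (u (k + 2))) :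
    arrivalCost f d (u 0) t (u (t + 1)) = pathCost f d u t + d (u t) (u (t + 1)) := by
  induction t with
  | zero => rw [pathCost_zero, zero_add, zero_add, arrivalCost]
  | succ t ih => rw [hu t t.lt_succ_self, ih fun k hk => hu k (hk.trans t.lt_succ_self),
      pathCost_succ]

variable [IsOrderedAddMonoid M]

theorem arrivalCost_le_pathCost_add (f : ℕ → σ → M) (d : σ → σ → M) (u : ℕ → σ) (t : ℕ) (x : σ) :
    arrivalCost f d (u 0) t x ≤ pathCost f d u t + d (u t) x := by
  induction t generalizing x with
  | zero => rw [pathCost_zero, zero_add, arrivalCost]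
  | succ t ih =>
    calc arrivalCost f d (u 0) (t + 1) x
        ≤ arrivalCost f d (u 0) t (u (t + 1)) + f (t + 1) (u (t + 1)) + d (u (t + 1)) x :=
          Finset.inf'_le _ (Finset.mem_univ _)
      _ ≤ pathCost f d u t + d (u t) (u (t + 1)) + f (t + 1) (u (t + 1)) + d (u (t + 1)) x := by
          gcongr
          exact ih _
      _ = pathCost f d u (t + 1) + d (u (t + 1)) x := by rw [pathCost_succ]

end DynamicProgramming

section SwitchCost

/-- The cost `β (y - x)^+` of switching from state `x` to state `y`. -/
noncomputable def switchCost (β : ℝ) (x y : Fin 2) : ℝ :=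
  β * max ((y.val : ℝ) - (x.val : ℝ)) 0

theorem switchCost_self (β : ℝ) (x : Fin 2) : switchCost β x x = 0 := by
  simp [switchCost]

theorem switchCost_zero_right (β : ℝ) (x : Fin 2) : switchCost β x 0 = 0 := by
  simp [switchCost]

theorem switchCost_zero_one (β : ℝ) : switchCost β 0 1 = β := by
  simp [switchCost]

theorem switchCost_one_left (β : ℝ) (x : Fin 2) : switchCost β 1 x = 0 := by
  match x with
  | 0 => exact switchCost_zero_right β 1
  | 1 => exact switchCost_self β 1

theorem switchCost_nonneg {β : ℝ} (hβ : 0 ≤ β) (x y : Fin 2) : 0 ≤ switchCost β x y :=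
  mul_nonneg hβ (le_max_right _ _)

theorem switchCost_zero_left_le {β : ℝ} (hβ : 0 ≤ β) (x : Fin 2) : switchCost β 0 x ≤ β := by
  match x with
  | 0 => exact (switchCost_self β 0).trans_le hβ
  | 1 => exact (switchCost_zero_one β).le

theorem scheduleCost_eq_pathCost {T : ℕ} (β : ℝ) (g : ℕ → Fin 2 → ℝ) (s : Schedule T) :
    scheduleCost T β g s = pathCost g (switchCost β) s.state T :=
  rfl

theorem Schedule.state_zero {T : ℕ} (s : Schedule T) : s.state 0 = 0 := by
  simp [Schedule.state]

theorem arrivalCost_le_scheduleCost {T : ℕ} (β : ℝ) (g : ℕ → Fin 2 → ℝ) (s : Schedule T) :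
    arrivalCost g (switchCost β) 0 T 0 ≤ scheduleCost T β g s := by
  simpa only [s.state_zero, switchCost_zero_right, add_zero, scheduleCost_eq_pathCost] using
    arrivalCost_le_pathCost_add g (switchCost β) s.state T 0

end SwitchCost

section CumDiff

variable {β : ℝ} (g : ℕ → Fin 2 → ℝ) (t : ℕ)

theorem arrivalCost_switchCost_succ (x : Fin 2) :
    arrivalCost g (switchCost β) 0 (t + 1) x =
      min (arrivalCost g (switchCost β) 0 t 0 + g (t + 1) 0 + switchCost β 0 x)
        (arrivalCost g (switchCost β) 0 t 1 + g (t + 1) 1) := by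
  simp [arrivalCost, Fin.univ_succ, switchCost_one_left]

theorem arrivalCost_switchCost_zero_sub_one (hβ : 0 ≤ β) :
    arrivalCost g (switchCost β) 0 t 0 - arrivalCost g (switchCost β) 0 t 1 = cumDiff β g t := by
  induction t with
  | zero => simp only [arrivalCost, cumDiff, switchCost_self, switchCost_zero_one, zero_sub]
  | succ t ih =>
    rw [arrivalCost_switchCost_succ, arrivalCost_switchCost_succ, switchCost_self,
      switchCost_zero_one, add_zero, min_sub_min_add_eq_min_zero_max_neg hβ, cumDiff, ← ih,
      costDiff, add_sub_add_comm]

theorem cumDiff_succ_eq_min_max (hβ : 0 ≤ β) :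
    cumDiff β g (t + 1) =
      min 0 (max (-β) ((arrivalCost g (switchCost β) 0 t 0 + g (t + 1) 0) -
        (arrivalCost g (switchCost β) 0 t 1 + g (t + 1) 1))) := by
  rw [cumDiff, costDiff, ← arrivalCost_switchCost_zero_sub_one g t hβ, add_sub_add_comm]

variable {g t}

theorem cumDiff_succ_eq_neg_iff (hβ : 0 < β) :
    cumDiff β g (t + 1) = -β ↔
      arrivalCost g (switchCost β) 0 t 0 + g (t + 1) 0 + β ≤
        arrivalCost g (switchCost β) 0 t 1 + g (t + 1) 1 := by
  rw [cumDiff_succ_eq_min_max g t hβ.le, min_zero_max_neg_eq_neg_iff hβ, sub_le_iff_le_add,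
    le_neg_add_iff_add_le, add_comm]

theorem cumDiff_succ_eq_zero_iff (hβ : 0 < β) :
    cumDiff β g (t + 1) = 0 ↔
      arrivalCost g (switchCost β) 0 t 1 + g (t + 1) 1 ≤
        arrivalCost g (switchCost β) 0 t 0 + g (t + 1) 0 := by
  rw [cumDiff_succ_eq_min_max g t hβ.le, min_zero_max_neg_eq_zero_iff hβ, sub_nonneg]

theorem arrivalCost_switchCost_succ_of_cumDiff_eq_neg (hβ : 0 < β) (h : cumDiff β g (t + 1) = -β)
    (x : Fin 2) :
    arrivalCost g (switchCost β) 0 (t + 1) x =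
      arrivalCost g (switchCost β) 0 t 0 + g (t + 1) 0 + switchCost β 0 x := by
  rw [arrivalCost_switchCost_succ, min_eq_left]
  rw [cumDiff_succ_eq_neg_iff hβ] at h
  linarith [switchCost_zero_left_le hβ.le x]

theorem arrivalCost_switchCost_succ_of_cumDiff_eq_zero (hβ : 0 < β) (h : cumDiff β g (t + 1) = 0)
    (x : Fin 2) :
    arrivalCost g (switchCost β) 0 (t + 1) x =
      arrivalCost g (switchCost β) 0 t 1 + g (t + 1) 1 + switchCost β 1 x := by
  rw [arrivalCost_switchCost_succ, switchCost_one_left, add_zero, min_eq_right]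
  rw [cumDiff_succ_eq_zero_iff hβ] at h
  linarith [switchCost_nonneg hβ.le 0 x]

theorem arrivalCost_switchCost_succ_of_cumDiff_ne (hβ : 0 < β) (h_neg : cumDiff β g (t + 1) ≠ -β)
    (h_zero : cumDiff β g (t + 1) ≠ 0) (x : Fin 2) :
    arrivalCost g (switchCost β) 0 (t + 1) x =
      arrivalCost g (switchCost β) 0 t x + g (t + 1) x + switchCost β x x := by
  rw [Ne, cumDiff_succ_eq_neg_iff hβ, not_le] at h_neg
  rw [Ne, cumDiff_succ_eq_zero_iff hβ, not_le] at h_zero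
  rw [arrivalCost_switchCost_succ, switchCost_self, add_zero]
  match x with
  | 0 => rw [switchCost_self, add_zero, min_eq_left h_zero.le]
  | 1 => rw [switchCost_zero_one, min_eq_right h_neg.le]

end CumDiff

section OfflineAlgorithm

variable {T t : ℕ} {β : ℝ} (g : ℕ → Fin 2 → ℝ)

theorem ofaState_zero : ofaState T β g 0 = 0 := by
  rw [ofaState, if_neg (Nat.not_lt_zero T), if_pos (by rw [cumDiff])]

theorem ofaState_of_lt (ht : T < t) : ofaState T β g t = 0 := by
  rw [ofaState, if_pos ht]

theorem ofaState_of_le (ht : t ≤ T) :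
    ofaState T β g t = if cumDiff β g t = -β then 0 else if cumDiff β g t = 0 then 1
      else ofaState T β g (t + 1) := by
  rw [ofaState, if_neg ht.not_gt]

theorem ofaSchedule_state : (ofaSchedule T β g).state = ofaState T β g := by
  funext t
  unfold Schedule.state
  split_ifs with ht
  · rw [ofaSchedule, Nat.sub_add_cancel ht.1]
  · obtain rfl | hT : t = 0 ∨ T < t := by omega
    · exact (ofaState_zero g).symm
    · exact (ofaState_of_lt g hT).symm

theorem arrivalCost_switchCost_succ_ofaState (hβ : 0 < β) (ht : t + 1 ≤ T) :
    arrivalCost g (switchCost β) 0 (t + 1) (ofaState T β g (t + 2)) =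
      arrivalCost g (switchCost β) 0 t (ofaState T β g (t + 1)) +
        g (t + 1) (ofaState T β g (t + 1)) +
        switchCost β (ofaState T β g (t + 1)) (ofaState T β g (t + 2)) := by
  rw [ofaState_of_le g ht]
  split_ifs with h_neg h_zero
  · exact arrivalCost_switchCost_succ_of_cumDiff_eq_neg hβ h_neg _
  · exact arrivalCost_switchCost_succ_of_cumDiff_eq_zero hβ h_zero _
  · exact arrivalCost_switchCost_succ_of_cumDiff_ne hβ h_neg h_zero _

theorem scheduleCost_ofaSchedule (hβ : 0 < β) :
    scheduleCost T β g (ofaSchedule T β g) = arrivalCost g (switchCost β) 0 T 0 := by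
  have h := arrivalCost_eq_pathCost_add (f := g) (d := switchCost β) (u := ofaState T β g)
    (t := T) fun k hk => by
      rw [ofaState_zero]
      exact arrivalCost_switchCost_succ_ofaState g hβ hk
  rw [ofaState_zero, ofaState_of_lt g T.lt_succ_self, switchCost_zero_right, add_zero] at h
  rw [scheduleCost_eq_pathCost, ofaSchedule_state, h]

end OfflineAlgorithm

theorem stmt1_general (T : ℕ) (β : ℝ) (hβ : 0 < β) (g : ℕ → Fin 2 → ℝ) :
    (∀ s : Schedule T,
      scheduleCost T β g (ofaSchedule T β g) ≤ scheduleCost T β g s) ∧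
    scheduleCost T β g (ofaSchedule T β g) = optCost T β g := by
  have h_le (s : Schedule T) :
      scheduleCost T β g (ofaSchedule T β g) ≤ scheduleCost T β g s :=
    (scheduleCost_ofaSchedule g hβ).trans_le (arrivalCost_le_scheduleCost β g s)
  exact ⟨h_le, le_antisymm (Finset.le_inf' _ _ fun s _ => h_le s)
    (Finset.inf'_le _ (Finset.mem_univ _))⟩

theorem stmt1 (T : ℕ) (β : ℝ) (hβ : 0 < β) (g : ℕ → Fin 2 → ℝ)
    (hg : ∀ t ∈ Finset.Icc 1 T, ∀ x : Fin 2, 0 ≤ g t x) :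
    (∀ s : Schedule T,
      scheduleCost T β g (ofaSchedule T β g) ≤ scheduleCost T β g s) ∧
    scheduleCost T β g (ofaSchedule T β g) = optCost T β g :=
  stmt1_general T β hβ g
end

section
/- Fix a switching cost $\beta>0$. For a horizon $T\in\mathbb N$ and cost functions $g_1,\dots,g_T:\{0,1\}\to[0,\infty)$, problem SP is to choose a schedule $s=(s_1,\dots,s_T)\in\{0,1\}^T$ minimizing $\mathrm{Cost}(s)=\sum_{t=1}^T\big(g_t(s_t)+\beta\,(s_t-s_{t-1})^+\big)$, where $s_0:=0$ and $(x)^+:=\max\{x,0\}$; let $\mathrm{Opt}$ be the minimum. Put $\Delta(0):=-\beta$ and $\Delta(t):=\min\{0,\max\{-\beta,\Delta(t-1)+g_t(0)-g_t(1)\}\}$ for $t=1,\dots,T$. The algorithm $\mathrm{gCHASE}_s$ outputs the schedule $x$ given by $x_0:=0$ and, for $t\ge 1$, $x_t:=0$ if $\Delta(t)=-\beta$, $x_t:=1$ if $\Delta(t)=0$, and $x_t:=x_{t-1}$ otherwise. Then $\mathrm{gCHASE}_s$ is an online algorithm ($x_t$ depends only on $g_1,\dots,g_t$), and its competitive ratio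 for problem SP is $3$. More precisely, $\mathrm{Cost}(x)\le 3\cdot\mathrm{Opt}$ for all $T$ and all nonnegative $g_1,\dots,g_T$, and $3$ is the smallest real $c$ for which there is a constant $\gamma$, independent of $T$ and of $g_1,\dots,g_T$, such that $\mathrm{Cost}(x)\le c\cdot\mathrm{Opt}+\gamma$ for all $T$ and all nonnegative $g_1,\dots,g_T$. -/
namespace EnergyPlan

/-- The one-slot cost functions `g_1, …, g_T : {0,1} → ℝ` are nonnegative. (Inputs are sequences
`g : ℕ → Fin 2 → ℝ`; only the entries with index `1, …, T` matter for horizon `T`.) -/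
def NonnegOn (T : ℕ) (g : ℕ → Fin 2 → ℝ) : Prop :=
  ∀ t ∈ Finset.Icc 1 T, ∀ i, 0 ≤ g t i

/-- The cost `∑_{t=1}^T (g_t(s_t) + β (s_t - s_{t-1})⁺)` of a sequence of states
`s_0, s_1, …, s_T ∈ {0,1}`. -/
noncomputable def cost (T : ℕ) (β : ℝ) (g : ℕ → Fin 2 → ℝ) (s : ℕ → Fin 2) : ℝ :=
  ∑ t ∈ Finset.Icc 1 T,
    (g t (s t) + β * max (((s t : ℕ) : ℝ) - ((s (t - 1) : ℕ) : ℝ)) 0)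

/-- The costs of all schedules that start from the initial state `s_0 = 0`. -/
def costSet (T : ℕ) (β : ℝ) (g : ℕ → Fin 2 → ℝ) : Set ℝ :=
  {c | ∃ s : ℕ → Fin 2, s 0 = 0 ∧ c = cost T β g s}

/-- The offline optimal cost; it is an attained minimum, see `opt_isLeast`. -/
noncomputable def opt (T : ℕ) (β : ℝ) (g : ℕ → Fin 2 → ℝ) : ℝ :=
  sInf (costSet T β g)

theorem opt_isLeast (T : ℕ) (β : ℝ) (g : ℕ → Fin 2 → ℝ) :
    IsLeast (costSet T β g) (opt T β g) := by
  have hfin : (costSet T β g).Finite := by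
    refine (Set.finite_range (fun f : Fin (T + 1) → Fin 2 =>
      cost T β g (fun t => if h : t < T + 1 then f ⟨t, h⟩ else 0))).subset ?_
    rintro c ⟨s, -, rfl⟩
    refine ⟨fun i => s i, ?_⟩
    refine Finset.sum_congr rfl fun t ht => ?_
    rw [Finset.mem_Icc] at ht
    have h1 : t < T + 1 := by omega
    have h2 : t - 1 < T + 1 := by omega
    simp only [h1, h2, dite_true]
  have hne : (costSet T β g).Nonempty := ⟨_, fun _ => 0, rfl, rfl⟩
  exact ⟨hne.csInf_mem hfin, fun _ hc => csInf_le hfin.bddBelow hc⟩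

/-- The one-slot cost difference `δ(t) = g_t(0) - g_t(1)`. -/
def diff (g : ℕ → Fin 2 → ℝ) (t : ℕ) : ℝ := g t 0 - g t 1

/-- The cumulative cost difference `Δ(t)`: `Δ(0) = -β` and
`Δ(t) = min{0, max{-β, Δ(t-1) + δ(t)}}`. -/
noncomputable def cumDiff (β : ℝ) (g : ℕ → Fin 2 → ℝ) : ℕ → ℝ
  | 0 => -β
  | t + 1 => min 0 (max (-β) (cumDiff β g t + diff g (t + 1)))

open scoped Classical in
/-- The schedule produced by `gCHASE_s`. -/
noncomputable def gChase (β : ℝ) (g : ℕ → Fin 2 → ℝ) : ℕ → Fin 2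
  | 0 => 0
  | t + 1 =>
      if cumDiff β g (t + 1) = -β then 0
      else if cumDiff β g (t + 1) = 0 then 1
      else gChase β g t

/-- A deterministic algorithm, mapping inputs to sequences of states, is online if it starts in
state `0` and its state at time `t` depends only on the inputs `g_1, …, g_t`. -/
def IsOnline (A : (ℕ → Fin 2 → ℝ) → ℕ → Fin 2) : Prop :=
  (∀ g, A g 0 = 0) ∧
    ∀ (t : ℕ) (g g' : ℕ → Fin 2 → ℝ), (∀ τ ∈ Finset.Icc 1 t, g τ = g' τ) → A g t = A g' t

/-- `A` is `c`-competitive (switching cost `β`): its cost is at most `c` times the optimal cost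
plus an additive constant that does not depend on the input (nor on its length). -/
def IsCompetitive (β : ℝ) (A : (ℕ → Fin 2 → ℝ) → ℕ → Fin 2) (c : ℝ) : Prop :=
  ∃ γ : ℝ, ∀ (T : ℕ) (g : ℕ → Fin 2 → ℝ), NonnegOn T g →
    cost T β g (A g) ≤ c * opt T β g + γ

/-- `c` is the competitive ratio of `A`: the smallest `c` for which `A` is `c`-competitive. -/
def IsCompetitiveRatio (β : ℝ) (A : (ℕ → Fin 2 → ℝ) → ℕ → Fin 2) (c : ℝ) : Prop :=
  IsLeast {c' : ℝ | IsCompetitive β A c'} c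

end EnergyPlan

/-!
The *work function* `w_t(j)` is the least cost of serving slots `1, …, t` and then being in
state `j`. It obeys a two-term dynamic programming recursion, `Opt = w_T(0)` because switching off
is free, and the clamped sum that drives `gCHASE_s` is nothing but `Δ(t) = w_t(0) - w_t(1)`.

The upper bound is a potential argument: in every slot the cost of `gCHASE_s` plus the change of
`Φ = (2 - x_t) (Δ(t) + β)` is at most `3 (w_t(0) - w_{t-1}(0))`. For the lower bound, an
adversary moves `Δ` from `-β` to just below `0` while the algorithm is off, nudges it to `0` so
that the algorithm switches on, and then does the same in the opposite direction. In such a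
period the algorithm pays nearly `β` while off, `β` to switch on and nearly `β` while on, whereas
staying off costs only `β`.
-/

namespace EnergyPlan

theorem le_of_forall_nat_mul_le_add {K : Type*} [Field K] [LinearOrder K] [IsStrictOrderedRing K]
    [Archimedean K] {a b γ : K} (h : ∀ n : ℕ, n * a ≤ n * b + γ) : a ≤ b := by
  by_contra! hlt
  obtain ⟨n, hn⟩ := exists_nat_gt (γ / (a - b))
  rw [div_lt_iff₀ (sub_pos.mpr hlt)] at hn
  linarith [h n]

theorem min_sub_min_add_eq_clamp {G : Type*} [AddCommGroup G] [LinearOrder G] [IsOrderedAddMonoid G]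
    {r : G} (hr : 0 ≤ r) (a b : G) : min a b - min (a + r) b = min 0 (max (-r) (a - b)) := by
  rcases le_total b a with hba | hab
  · rw [min_eq_right hba, min_eq_right (le_add_of_le_of_nonneg hba hr), sub_self,
      min_eq_left (le_max_of_le_right (sub_nonneg.mpr hba))]
  · rw [min_eq_left hab, ← max_sub_sub_left, sub_add_cancel_left,
      min_eq_right (max_le (neg_nonpos.mpr hr) (sub_nonpos.mpr hab))]

section Cost

variable {β : ℝ} {g : ℕ → Fin 2 → ℝ} {s s' : ℕ → Fin 2} {T T' : ℕ}

/-- The switching cost `β (j - i)⁺` of moving from state `i` to state `j`. -/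
noncomputable def switchCost (β : ℝ) (i j : Fin 2) : ℝ :=
  β * max (((j : ℕ) : ℝ) - ((i : ℕ) : ℝ)) 0

@[simp]
theorem switchCost_self (i : Fin 2) : switchCost β i i = 0 := by
  simp [switchCost]

@[simp]
theorem switchCost_zero_right (i : Fin 2) : switchCost β i 0 = 0 := by
  simp [switchCost]

@[simp]
theorem switchCost_zero_one : switchCost β 0 1 = β := by
  simp [switchCost]

@[simp]
theorem cost_zero (β : ℝ) (g : ℕ → Fin 2 → ℝ) (s : ℕ → Fin 2) : cost 0 β g s = 0 := by
  simp [cost]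

theorem cost_succ (T : ℕ) (β : ℝ) (g : ℕ → Fin 2 → ℝ) (s : ℕ → Fin 2) :
    cost (T + 1) β g s =
      cost T β g s + (g (T + 1) (s (T + 1)) + switchCost β (s T) (s (T + 1))) := by
  simp [cost, switchCost, Finset.sum_Icc_succ_top]

theorem cost_congr (h : ∀ t ≤ T, s t = s' t) : cost T β g s = cost T β g s' := by
  refine Finset.sum_congr rfl fun t ht => ?_
  have ht : t ≤ T := (Finset.mem_Icc.mp ht).2
  rw [h t ht, h (t - 1) (t.pred_le.trans ht)]

theorem NonnegOn.mono (hg : NonnegOn T' g) (h : T ≤ T') : NonnegOn T g :=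
  fun t ht => hg t (Finset.Icc_subset_Icc_right h ht)

theorem NonnegOn.last (hg : NonnegOn (T + 1) g) (i : Fin 2) : 0 ≤ g (T + 1) i :=
  hg (T + 1) (Finset.right_mem_Icc.mpr (Nat.le_add_left 1 T)) i

end Cost

section WorkFunction

variable {β : ℝ} {g : ℕ → Fin 2 → ℝ} {s : ℕ → Fin 2}

/-- The work function `w_t(j)`: the least cost of serving slots `1, …, t` from the initial state `0`
and switching to state `j` afterwards. The final switch is included, so `w_0(1) = β`. -/
noncomputable def workFun (β : ℝ) (g : ℕ → Fin 2 → ℝ) : ℕ → Fin 2 → ℝ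
  | 0, j => switchCost β 0 j
  | t + 1, j => min (workFun β g t 0 + g (t + 1) 0 + switchCost β 0 j)
      (workFun β g t 1 + g (t + 1) 1 + switchCost β 1 j)

theorem workFun_succ_le (t : ℕ) (i j : Fin 2) :
    workFun β g (t + 1) j ≤ workFun β g t i + g (t + 1) i + switchCost β i j := by
  rw [workFun]
  fin_cases i
  exacts [min_le_left _ _, min_le_right _ _]

theorem exists_workFun_succ_eq (t : ℕ) (j : Fin 2) :
    ∃ i, workFun β g (t + 1) j = workFun β g t i + g (t + 1) i + switchCost β i j := by
  rw [workFun]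
  exact (min_choice _ _).elim (fun h => ⟨0, h⟩) (fun h => ⟨1, h⟩)

theorem workFun_le_cost_add_switchCost (hs : s 0 = 0) (t : ℕ) (j : Fin 2) :
    workFun β g t j ≤ cost t β g s + switchCost β (s t) j := by
  induction t generalizing j with
  | zero => simp [workFun, hs]
  | succ t ih =>
    calc workFun β g (t + 1) j
        ≤ workFun β g t (s (t + 1)) + g (t + 1) (s (t + 1)) + switchCost β (s (t + 1)) j :=
          workFun_succ_le t _ j
      _ ≤ cost (t + 1) β g s + switchCost β (s (t + 1)) j := by
          rw [cost_succ]
          linarith [ih (s (t + 1))]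

theorem exists_cost_add_switchCost_eq_workFun (β : ℝ) (g : ℕ → Fin 2 → ℝ) (t : ℕ) (j : Fin 2) :
    ∃ s : ℕ → Fin 2, s 0 = 0 ∧ cost t β g s + switchCost β (s t) j = workFun β g t j := by
  induction t generalizing j with
  | zero => exact ⟨fun _ => 0, rfl, by simp [workFun]⟩
  | succ t ih =>
    obtain ⟨i, hi⟩ := exists_workFun_succ_eq (β := β) (g := g) t j
    obtain ⟨s, hs, hcost⟩ := ih i
    have hagree : ∀ τ ≤ t, Function.update s (t + 1) i τ = s τ := fun τ hτ =>
      Function.update_of_ne (by omega) _ _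
    refine ⟨Function.update s (t + 1) i, (hagree 0 t.zero_le).trans hs, ?_⟩
    rw [cost_succ, cost_congr hagree, hagree t le_rfl, Function.update_self, hi, ← hcost]
    ring

theorem opt_eq_workFun (T : ℕ) (β : ℝ) (g : ℕ → Fin 2 → ℝ) : opt T β g = workFun β g T 0 := by
  refine (opt_isLeast T β g).unique ⟨?_, ?_⟩
  · obtain ⟨s, hs, h⟩ := exists_cost_add_switchCost_eq_workFun β g T 0
    exact ⟨s, hs, by simpa using h.symm⟩
  · rintro _ ⟨s, hs, rfl⟩
    simpa using workFun_le_cost_add_switchCost hs T 0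

end WorkFunction

section CumDiff

variable {β : ℝ} {g g' : ℕ → Fin 2 → ℝ} {t : ℕ}

theorem cumDiff_nonpos (hβ : 0 ≤ β) (g : ℕ → Fin 2 → ℝ) (t : ℕ) : cumDiff β g t ≤ 0 := by
  cases t with
  | zero => exact neg_nonpos.mpr hβ
  | succ t => exact min_le_left _ _

theorem neg_le_cumDiff (hβ : 0 ≤ β) (g : ℕ → Fin 2 → ℝ) (t : ℕ) : -β ≤ cumDiff β g t := by
  cases t with
  | zero => exact le_rfl
  | succ t => exact le_min (neg_nonpos.mpr hβ) (le_max_left _ _)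

theorem cumDiff_succ_of_le_neg (hβ : 0 ≤ β) (h : cumDiff β g t + diff g (t + 1) ≤ -β) :
    cumDiff β g (t + 1) = -β := by
  rw [cumDiff, max_eq_left h, min_eq_right (neg_nonpos.mpr hβ)]

theorem cumDiff_succ_of_nonneg (h : 0 ≤ cumDiff β g t + diff g (t + 1)) :
    cumDiff β g (t + 1) = 0 :=
  min_eq_left (h.trans (le_max_right _ _))

theorem cumDiff_succ_of_mem_Icc (h : cumDiff β g t + diff g (t + 1) ∈ Set.Icc (-β) 0) :
    cumDiff β g (t + 1) = cumDiff β g t + diff g (t + 1) := by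
  rw [cumDiff, max_eq_right h.1, min_eq_right h.2]

theorem cumDiff_congr (h : ∀ τ ∈ Finset.Icc 1 t, g τ = g' τ) : cumDiff β g t = cumDiff β g' t := by
  induction t with
  | zero => rfl
  | succ t ih =>
    rw [cumDiff, cumDiff, diff, diff, h (t + 1) (Finset.right_mem_Icc.mpr (Nat.le_add_left 1 t)),
      ih fun τ hτ => h τ (Finset.Icc_subset_Icc_right t.le_succ hτ)]

theorem workFun_zero_sub_workFun_one (hβ : 0 ≤ β) (g : ℕ → Fin 2 → ℝ) (t : ℕ) :
    workFun β g t 0 - workFun β g t 1 = cumDiff β g t := by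
  induction t with
  | zero => simp [workFun, cumDiff]
  | succ t ih =>
    simp only [workFun, switchCost_self, switchCost_zero_right, switchCost_zero_one, add_zero]
    rw [min_sub_min_add_eq_clamp hβ, cumDiff, diff, ← ih, add_sub_add_comm]

theorem workFun_succ_zero (hβ : 0 ≤ β) (g : ℕ → Fin 2 → ℝ) (t : ℕ) :
    workFun β g (t + 1) 0 =
      workFun β g t 0 + min (g (t + 1) 0) (g (t + 1) 1 - cumDiff β g t) := by
  rw [workFun, switchCost_zero_right, switchCost_zero_right,
    ← workFun_zero_sub_workFun_one hβ, ← min_add_add_left]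
  ring_nf

end CumDiff

section GChase

variable {β : ℝ} {g : ℕ → Fin 2 → ℝ} {t : ℕ}

theorem gChase_eq_zero (h : cumDiff β g t = -β) : gChase β g t = 0 := by
  cases t with
  | zero => rfl
  | succ t => rw [gChase, if_pos h]

theorem gChase_eq_one (hβ : 0 < β) (h : cumDiff β g t = 0) : gChase β g t = 1 := by
  have hne : cumDiff β g t ≠ -β := by linarith
  cases t with
  | zero => exact absurd rfl hne
  | succ t => rw [gChase, if_neg hne, if_pos h]

theorem gChase_succ_of_mem_Ioo (h : cumDiff β g (t + 1) ∈ Set.Ioo (-β) 0) :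
    gChase β g (t + 1) = gChase β g t := by
  rw [gChase, if_neg h.1.ne', if_neg h.2.ne]

theorem isOnline_gChase (β : ℝ) : IsOnline (gChase β) := by
  refine ⟨fun _ => rfl, fun t g g' h => ?_⟩
  induction t with
  | zero => rfl
  | succ t ih =>
    rw [gChase, gChase, cumDiff_congr h,
      ih fun τ hτ => h τ (Finset.Icc_subset_Icc_right t.le_succ hτ)]

/-- The potential `Φ = (2 - i) (d + β)` of an algorithm in state `i` when `Δ = d`, used to amortize
the cost of `gCHASE_s` against the work function. -/
noncomputable def potential (β d : ℝ) (i : Fin 2) : ℝ :=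
  (2 - ((i : ℕ) : ℝ)) * (d + β)

theorem potential_zero (β d : ℝ) : potential β d 0 = 2 * (d + β) := by
  simp [potential]

theorem potential_one (β d : ℝ) : potential β d 1 = d + β := by
  norm_num [potential]

theorem potential_neg_self (β : ℝ) (i : Fin 2) : potential β (-β) i = 0 := by
  simp [potential]

theorem potential_nonneg {d : ℝ} (hd : -β ≤ d) (i : Fin 2) : 0 ≤ potential β d i := by
  have hi : ((i : ℕ) : ℝ) ≤ 2 := mod_cast i.isLt.le
  exact mul_nonneg (by linarith) (by linarith)

theorem gChase_step_add_potential_le (hβ : 0 < β) (hg : ∀ i, 0 ≤ g (t + 1) i) :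
    g (t + 1) (gChase β g (t + 1)) + switchCost β (gChase β g t) (gChase β g (t + 1)) +
        potential β (cumDiff β g (t + 1)) (gChase β g (t + 1)) ≤
      potential β (cumDiff β g t) (gChase β g t) +
        3 * (workFun β g (t + 1) 0 - workFun β g t 0) := by
  have hΔ := cumDiff_nonpos hβ.le g t
  have hΦ := potential_nonneg (neg_le_cumDiff hβ.le g t) (gChase β g t)
  have hδ : diff g (t + 1) = g (t + 1) 0 - g (t + 1) 1 := rfl
  have h0 := hg 0
  have h1 := hg 1
  rw [workFun_succ_zero hβ.le, add_sub_cancel_left]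
  rcases le_or_gt (cumDiff β g t + diff g (t + 1)) (-β) with hlow | hlow
  · have hΔ' := cumDiff_succ_of_le_neg hβ.le hlow
    rw [gChase_eq_zero hΔ', hΔ', potential_neg_self, switchCost_zero_right,
      min_eq_left (by linarith)]
    linarith
  rcases le_or_gt 0 (cumDiff β g t + diff g (t + 1)) with hhigh | hhigh
  · have hΔ' := cumDiff_succ_of_nonneg hhigh
    rw [gChase_eq_one hβ hΔ', hΔ', potential_one, min_eq_right (by linarith)]
    obtain hx | hx : gChase β g t = 0 ∨ gChase β g t = 1 := by omega
    · rw [hx, switchCost_zero_one, potential_zero]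
      linarith
    · rw [hx, switchCost_self, potential_one]
      linarith
  · have hΔ' := cumDiff_succ_of_mem_Icc ⟨hlow.le, hhigh.le⟩
    rw [gChase_succ_of_mem_Ioo (hΔ' ▸ ⟨hlow, hhigh⟩), hΔ', switchCost_self,
      min_eq_left (by linarith)]
    obtain hx | hx : gChase β g t = 0 ∨ gChase β g t = 1 := by omega
    · rw [hx, potential_zero, potential_zero]
      linarith
    · rw [hx, potential_one, potential_one]
      linarith

theorem cost_gChase_add_potential_le (hβ : 0 < β) (hg : NonnegOn t g) :
    cost t β g (gChase β g) + potential β (cumDiff β g t) (gChase β g t) ≤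
      3 * workFun β g t 0 := by
  induction t with
  | zero => simp [workFun, cumDiff, potential_neg_self]
  | succ t ih =>
    have hstep := gChase_step_add_potential_le hβ hg.last
    rw [cost_succ]
    linarith [ih (hg.mono t.le_succ)]

theorem cost_gChase_le (hβ : 0 < β) (T : ℕ) (g : ℕ → Fin 2 → ℝ) (hg : NonnegOn T g) :
    cost T β g (gChase β g) ≤ 3 * opt T β g := by
  rw [opt_eq_workFun]
  exact (le_add_of_nonneg_right (potential_nonneg (neg_le_cumDiff hβ.le g T) _)).trans
    (cost_gChase_add_potential_le hβ hg)

end GChase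

section LowerBound

variable {β ε : ℝ}

/-- The adversarial input of period four against `gCHASE_s`: along a period `Δ` takes the values
`-β, -ε, 0, ε - β, -β`. -/
def cyclicInput (β ε : ℝ) (t : ℕ) : Fin 2 → ℝ :=
  match t % 4 with
  | 1 => ![β - ε, 0]
  | 2 => ![ε, 0]
  | 3 => ![0, β - ε]
  | _ => ![0, ε]

theorem cyclicInput_four_mul_add_one (β ε : ℝ) (n : ℕ) :
    cyclicInput β ε (4 * n + 1) = ![β - ε, 0] := by
  simp [cyclicInput]

theorem cyclicInput_four_mul_add_two (β ε : ℝ) (n : ℕ) :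
    cyclicInput β ε (4 * n + 2) = ![ε, 0] := by
  simp [cyclicInput]

theorem cyclicInput_four_mul_add_three (β ε : ℝ) (n : ℕ) :
    cyclicInput β ε (4 * n + 3) = ![0, β - ε] := by
  simp [cyclicInput]

theorem cyclicInput_four_mul_add_four (β ε : ℝ) (n : ℕ) :
    cyclicInput β ε (4 * n + 4) = ![0, ε] := by
  simp [cyclicInput]

theorem cyclicInput_nonneg (hε : 0 ≤ ε) (hεβ : ε ≤ β) (t : ℕ) : 0 ≤ cyclicInput β ε t := by
  unfold cyclicInput
  split <;> simp [Pi.le_def, Fin.forall_fin_two, hε, hεβ]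

theorem cumDiff_cyclicInput_period (hε : 0 ≤ ε) (hεβ : ε ≤ β) {n : ℕ}
    (h : cumDiff β (cyclicInput β ε) (4 * n) = -β) :
    cumDiff β (cyclicInput β ε) (4 * n + 1) = -ε ∧
      cumDiff β (cyclicInput β ε) (4 * n + 2) = 0 ∧
      cumDiff β (cyclicInput β ε) (4 * n + 3) = ε - β ∧
      cumDiff β (cyclicInput β ε) (4 * n + 4) = -β := by
  have hδ₁ : diff (cyclicInput β ε) (4 * n + 1) = β - ε := by
    simp [diff, cyclicInput_four_mul_add_one]
  have hδ₂ : diff (cyclicInput β ε) (4 * n + 2) = ε := by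
    simp [diff, cyclicInput_four_mul_add_two]
  have hδ₃ : diff (cyclicInput β ε) (4 * n + 3) = ε - β := by
    simp [diff, cyclicInput_four_mul_add_three]
  have hδ₄ : diff (cyclicInput β ε) (4 * n + 4) = -ε := by
    simp [diff, cyclicInput_four_mul_add_four]
  have hΔ₁ : cumDiff β (cyclicInput β ε) (4 * n + 1) = -ε := by
    rw [cumDiff_succ_of_mem_Icc ⟨by linarith, by linarith⟩]
    linarith
  have hΔ₂ : cumDiff β (cyclicInput β ε) (4 * n + 2) = 0 :=
    cumDiff_succ_of_nonneg (by linarith)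
  have hΔ₃ : cumDiff β (cyclicInput β ε) (4 * n + 3) = ε - β := by
    rw [cumDiff_succ_of_mem_Icc ⟨by linarith, by linarith⟩]
    linarith
  have hΔ₄ : cumDiff β (cyclicInput β ε) (4 * n + 4) = -β :=
    cumDiff_succ_of_le_neg (hε.trans hεβ) (by linarith)
  exact ⟨hΔ₁, hΔ₂, hΔ₃, hΔ₄⟩

theorem cumDiff_cyclicInput_four_mul (hε : 0 ≤ ε) (hεβ : ε ≤ β) (n : ℕ) :
    cumDiff β (cyclicInput β ε) (4 * n) = -β := by
  induction n with
  | zero => rfl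
  | succ n ih => exact (cumDiff_cyclicInput_period hε hεβ ih).2.2.2

theorem gChase_cyclicInput_period (hε : 0 < ε) (hεβ : ε < β) (n : ℕ) :
    gChase β (cyclicInput β ε) (4 * n) = 0 ∧
      gChase β (cyclicInput β ε) (4 * n + 1) = 0 ∧
      gChase β (cyclicInput β ε) (4 * n + 2) = 1 ∧
      gChase β (cyclicInput β ε) (4 * n + 3) = 1 ∧
      gChase β (cyclicInput β ε) (4 * n + 4) = 0 := by
  have hΔ₀ := cumDiff_cyclicInput_four_mul hε.le hεβ.le n
  obtain ⟨hΔ₁, hΔ₂, hΔ₃, hΔ₄⟩ := cumDiff_cyclicInput_period hε.le hεβ.le hΔ₀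
  have hx₀ := gChase_eq_zero hΔ₀
  have hx₂ := gChase_eq_one (hε.trans hεβ) hΔ₂
  have hx₁ : gChase β (cyclicInput β ε) (4 * n + 1) = gChase β (cyclicInput β ε) (4 * n) :=
    gChase_succ_of_mem_Ioo ⟨by linarith, by linarith⟩
  have hx₃ : gChase β (cyclicInput β ε) (4 * n + 3) = gChase β (cyclicInput β ε) (4 * n + 2) :=
    gChase_succ_of_mem_Ioo ⟨by linarith, by linarith⟩
  exact ⟨hx₀, hx₁.trans hx₀, hx₂, hx₃.trans hx₂, gChase_eq_zero hΔ₄⟩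

theorem cost_gChase_cyclicInput (hε : 0 < ε) (hεβ : ε < β) (n : ℕ) :
    cost (4 * n) β (cyclicInput β ε) (gChase β (cyclicInput β ε)) = n * (3 * β - 2 * ε) := by
  induction n with
  | zero => simp
  | succ n ih =>
    obtain ⟨hx₀, hx₁, hx₂, hx₃, hx₄⟩ := gChase_cyclicInput_period hε hεβ n
    rw [Nat.mul_succ, cost_succ, cost_succ, cost_succ, cost_succ, ih, hx₀, hx₁, hx₂, hx₃, hx₄]
    simp only [cyclicInput_four_mul_add_one, cyclicInput_four_mul_add_two,
      cyclicInput_four_mul_add_three, cyclicInput_four_mul_add_four, switchCost_self,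
      switchCost_zero_right, switchCost_zero_one, Matrix.cons_val_zero, Matrix.cons_val_one]
    push_cast
    ring

theorem opt_cyclicInput (hε : 0 ≤ ε) (hεβ : ε ≤ β) (n : ℕ) :
    opt (4 * n) β (cyclicInput β ε) = n * β := by
  have hβ := hε.trans hεβ
  rw [opt_eq_workFun]
  induction n with
  | zero => simp [workFun]
  | succ n ih =>
    have hΔ₀ := cumDiff_cyclicInput_four_mul hε hεβ n
    obtain ⟨hΔ₁, hΔ₂, hΔ₃, -⟩ := cumDiff_cyclicInput_period hε hεβ hΔ₀
    rw [Nat.mul_succ, workFun_succ_zero hβ, workFun_succ_zero hβ, workFun_succ_zero hβ,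
      workFun_succ_zero hβ, ih, hΔ₀, hΔ₁, hΔ₂, hΔ₃]
    simp only [cyclicInput_four_mul_add_one, cyclicInput_four_mul_add_two,
      cyclicInput_four_mul_add_three, cyclicInput_four_mul_add_four, Matrix.cons_val_zero,
      Matrix.cons_val_one]
    rw [min_eq_left (by linarith), min_eq_left (by linarith), min_eq_left (by linarith),
      min_eq_left (by linarith)]
    push_cast
    ring

theorem three_le_of_isCompetitive_gChase (hβ : 0 < β) {c : ℝ}
    (hc : IsCompetitive β (gChase β) c) : 3 ≤ c := by
  obtain ⟨γ, hγ⟩ := hc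
  have hperiod : ∀ ε, 0 < ε → ε < β → 3 * β - 2 * ε ≤ c * β := fun ε hε hεβ =>
    le_of_forall_nat_mul_le_add fun n => by
      have h := hγ (4 * n) (cyclicInput β ε) fun t _ => cyclicInput_nonneg hε.le hεβ.le t
      rw [cost_gChase_cyclicInput hε hεβ, opt_cyclicInput hε.le hεβ.le] at h
      linarith
  by_contra! hlt
  have hgap : 0 < β * (3 - c) := mul_pos hβ (by linarith)
  obtain ⟨ε, hε, hε_lt⟩ := exists_between (lt_min hβ (half_pos hgap))
  obtain ⟨hεβ, hε_gap⟩ := lt_min_iff.mp hε_lt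
  linarith [hperiod ε hε hεβ]

theorem isCompetitiveRatio_gChase (hβ : 0 < β) : IsCompetitiveRatio β (gChase β) 3 :=
  ⟨⟨0, fun T g hg => (cost_gChase_le hβ T g hg).trans_eq (add_zero _).symm⟩,
    fun _ => three_le_of_isCompetitive_gChase hβ⟩

end LowerBound

end EnergyPlan

theorem stmt2 (β : ℝ) (hβ : 0 < β) :
    EnergyPlan.IsOnline (EnergyPlan.gChase β) ∧
    (∀ (T : ℕ) (g : ℕ → Fin 2 → ℝ), EnergyPlan.NonnegOn T g →
      EnergyPlan.cost T β g (EnergyPlan.gChase β g) ≤ 3 * EnergyPlan.opt T β g) ∧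
    EnergyPlan.IsCompetitiveRatio β (EnergyPlan.gChase β) 3 :=
  ⟨EnergyPlan.isOnline_gChase β, EnergyPlan.cost_gChase_le hβ,
    EnergyPlan.isCompetitiveRatio_gChase hβ⟩
end
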